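/- Let n ≥ 3 and γ > 0. Then: (a) the axisymmetric configuration with 2n−1 interfaces located at z_i = −1 + i/n (i = 1, …, 2n−1) is not a critical point of E_γ; and (b) the axisymmetric configuration with 2n interfaces located at z_i = −1 + (2i−1)/(2n) (i = 1, …, 2n) is not a critical point of E_γ. In other words, no uniformly distributed axisymmetric pattern with more than four interfaces is a critical point of E_γ for any γ > 0. -/

import Mathlib

/-- The axisymmetric step pattern with `n` interfaces located at `z 1 < ⋯ < z n`
(with `z 0 = -1`, `z (n+1) = 1`): `u(t) = (-1)^(k+1)` for `t ∈ [z k, z (k+1))`,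
so `u = -1` on `[-1, z 1)`. -/
noncomputable def pattern (n : ℕ) (z : ℕ → ℝ) (t : ℝ) : ℝ :=
  (-1 : ℝ) ^ (((Finset.Icc 1 n).filter (fun i => z i ≤ t)).card + 1)

/-- The mass `m = (1/2)∫_{-1}^1 u(t) dt`. -/
noncomputable def mass (n : ℕ) (z : ℕ → ℝ) : ℝ :=
  (1 / 2) * ∫ t in (-1 : ℝ)..1, pattern n z t

/-- `ξ(t) = ∫_{-1}^t (u(s) - m) ds`. -/
noncomputable def xi (n : ℕ) (z : ℕ → ℝ) (t : ℝ) : ℝ :=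
  ∫ s in (-1 : ℝ)..t, (pattern n z s - mass n z)

/-- The potential `v(t) = ∫_0^t ξ(s)/(1-s²) ds`. -/
noncomputable def pot (n : ℕ) (z : ℕ → ℝ) (t : ℝ) : ℝ :=
  ∫ s in (0 : ℝ)..t, xi n z s / (1 - s ^ 2)

/-- `z` is an axisymmetric configuration with `n` interfaces:
`-1 = z 0 < z 1 < ⋯ < z n < z (n+1) = 1`. -/
def IsConfig (n : ℕ) (z : ℕ → ℝ) : Prop :=
  z 0 = -1 ∧ z (n + 1) = 1 ∧ ∀ i j, i < j → j ≤ n + 1 → z i < z j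

/-- The configuration is a critical point of `E_γ`: the Euler–Lagrange equation
`κ_g(z_k) + 4γ v(z_k) = λ` holds at every interface `z 1, …, z n`, with a single
constant `λ`; here `κ_g(z_k) = (-1)^(k+1) z_k / √(1 - z_k²)` is the signed geodesic
curvature of the interface circle with respect to the outer normal of `{u = 1}`. -/
def IsCritical (γ : ℝ) (n : ℕ) (z : ℕ → ℝ) : Prop :=
  ∃ lam : ℝ, ∀ k, 1 ≤ k → k ≤ n →
    (-1 : ℝ) ^ (k + 1) * z k / Real.sqrt (1 - z k ^ 2) + 4 * γ * pot n z (z k) = lam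

/-!
When the mass vanishes, `u` is odd about every interface, so `ξ` is even about it; hence `ξ` is a
triangular wave determined by reflections.  Write `f(x) = x/√(1 - x²)`.

Interfaces at `-1 + i/n`.  The wave starts at `0` and never becomes positive, so `v ≤ 0` on
`[0, 1)`.  The interface at `0` forces `λ = 0`, so `4γ v` equals `∓f` at the next two interfaces:
two numbers of strictly opposite signs, although `v` has the same sign at both.

Interfaces at `-1 + (2i - 1)h`, where `h = 1/(2n) ≤ 1/6`.  Since `ξ(1) = 0`, reflection shows that
`ξ` vanishes midway between the last three interfaces `1 - 5h`, `1 - 3h`, `1 - h`.  With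
`D(c) = ∫_{c-h}^{c+h} (t - c)/(1 - t²) dt`, subtracting consecutive equations gives
`f(1 - 5h) + f(1 - 3h) = 4γ D(1 - 4h)` and `f(1 - 3h) + f(1 - h) = 4γ D(1 - 2h)`.  Folding the
integrals about `c` shows `D(1 - 2h) ≥ 4 D(1 - 4h) ≥ 0`, whereas `f(1 - h) ≤ 3 f(1 - 3h)` makes the
second left-hand side less than `4` times the first.
-/

open Set MeasureTheory

section Pattern

variable {n k : ℕ} {z : ℕ → ℝ} {d s t : ℝ}

lemma intervalIntegrable_pattern (n : ℕ) (z : ℕ → ℝ) (a b : ℝ) :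
    IntervalIntegrable (pattern n z) volume a b := by
  have card_mono : Monotone fun t => ((Finset.Icc 1 n).filter (fun i => z i ≤ t)).card :=
    fun _ _ hst => Finset.card_le_card
      (Finset.monotone_filter_right _ fun _ _ hi => hi.trans hst)
  have pattern_measurable : Measurable (pattern n z) :=
    (measurable_from_nat (f := fun m => (-1 : ℝ) ^ (m + 1))).comp card_mono.measurable
  refine (intervalIntegrable_const (c := (1 : ℝ))).mono_fun
    pattern_measurable.aestronglyMeasurable (.of_forall fun t => ?_)
  simp [pattern]

namespace IsConfig

lemma strictMonoOn (hz : IsConfig n z) : StrictMonoOn z (Iic (n + 1)) :=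
  fun i _ j hj hij => hz.2.2 i j hij hj

lemma of_lt_succ (h0 : z 0 = -1) (h1 : z (n + 1) = 1) (hlt : ∀ k ≤ n, z k < z (k + 1)) :
    IsConfig n z :=
  ⟨h0, h1, fun _ _ hij hj => strictMonoOn_Iic_of_lt_succ (n := n + 1)
    (fun k hk => hlt k (Nat.lt_succ_iff.1 hk)) (hij.le.trans hj) hj hij⟩

lemma lt_succ (hz : IsConfig n z) (hk : k ≤ n) : z k < z (k + 1) :=
  hz.2.2 k (k + 1) k.lt_succ_self (Nat.succ_le_succ hk)

lemma mem_Ioo (hz : IsConfig n z) (hk0 : 1 ≤ k) (hk : k ≤ n) : z k ∈ Ioo (-1) 1 := by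
  constructor
  · exact hz.1 ▸ hz.2.2 0 k hk0 (hk.trans n.le_succ)
  · exact hz.2.1 ▸ hz.2.2 k (n + 1) (Nat.lt_succ_of_le hk) le_rfl

lemma exists_mem_Icc (hz : IsConfig n z) (ht : t ∈ Icc (-1) 1) :
    ∃ k ≤ n, t ∈ Icc (z k) (z (k + 1)) := by
  let k := Nat.findGreatest (fun i => z i ≤ t) n
  have hkn : k ≤ n := Nat.findGreatest_le n
  have hk : z k ≤ t :=
    Nat.findGreatest_spec (P := fun i => z i ≤ t) (Nat.zero_le n) (hz.1.trans_le ht.1)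
  refine ⟨k, hkn, hk, ?_⟩
  rcases hkn.lt_or_eq with hlt | heq
  · exact (not_le.1 (Nat.findGreatest_is_greatest (P := fun i => z i ≤ t) k.lt_succ_self hlt)).le
  · rw [heq, hz.2.1]
    exact ht.2

lemma pattern_eq (hz : IsConfig n z) (hk : k ≤ n) (ht : t ∈ Ico (z k) (z (k + 1))) :
    pattern n z t = (-1) ^ (k + 1) := by
  have passed_iff : ∀ i ∈ Finset.Icc 1 n, z i ≤ t ↔ i ≤ k := by
    intro i hi
    have hi' : i ≤ n + 1 := (Finset.mem_Icc.1 hi).2.trans n.le_succ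
    refine ⟨fun hit => ?_, fun hik => ?_⟩
    · exact Nat.lt_succ_iff.1 <|
        (hz.strictMonoOn.lt_iff_lt hi' (Nat.succ_le_succ hk)).1 (hit.trans_lt ht.2)
    · exact ((hz.strictMonoOn.le_iff_le hi' (hk.trans n.le_succ)).2 hik).trans ht.1
  have passed_eq : (Finset.Icc 1 n).filter (fun i => z i ≤ t) = Finset.Icc 1 k := by
    rw [Finset.filter_congr passed_iff]
    ext i
    simp only [Finset.mem_filter, Finset.mem_Icc]
    lia
  rw [pattern, passed_eq, Nat.card_Icc, Nat.add_sub_cancel]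

lemma integral_pattern (hz : IsConfig n z) (hk : k ≤ n) (hs : s ∈ Icc (z k) (z (k + 1)))
    (ht : t ∈ Icc (z k) (z (k + 1))) :
    ∫ x in s..t, pattern n z x = (-1) ^ (k + 1) * (t - s) := by
  have pattern_ae : ∀ᵐ x : ℝ, x ∈ uIoc s t → pattern n z x = (-1) ^ (k + 1) := by
    filter_upwards [Measure.ae_ne volume (z (k + 1))] with x hx hxst
    have hx' := ordConnected_Icc.uIcc_subset hs ht (uIoc_subset_uIcc hxst)
    exact hz.pattern_eq hk ⟨hx'.1, hx'.2.lt_of_ne hx⟩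
  rw [intervalIntegral.integral_congr_ae pattern_ae, intervalIntegral.integral_const, smul_eq_mul,
    mul_comm]

lemma integral_pattern_around_interface (hz : IsConfig n z) (hk : k < n) (hd : 0 ≤ d)
    (hleft : z k ≤ z (k + 1) - d) (hright : z (k + 1) + d ≤ z (k + 2)) :
    ∫ x in (z (k + 1) - d)..(z (k + 1) + d), pattern n z x = 0 := by
  rw [← intervalIntegral.integral_add_adjacent_intervals (b := z (k + 1))
      (intervalIntegrable_pattern ..) (intervalIntegrable_pattern ..),
    hz.integral_pattern hk.le ⟨hleft, by linarith⟩ ⟨by linarith, le_rfl⟩,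
    hz.integral_pattern (k := k + 1) hk ⟨le_rfl, by linarith⟩ ⟨by linarith, hright⟩]
  ring

end IsConfig

lemma mass_eq_zero_of_partition {a : ℕ → ℝ} {N : ℕ} (h0 : a 0 = -1) (hN : a N = 1)
    (ha : ∀ j < N, ∫ x in (a j)..(a (j + 1)), pattern n z x = 0) : mass n z = 0 := by
  have hsum := intervalIntegral.sum_integral_adjacent_intervals (μ := volume) (n := N)
    fun j _ => intervalIntegrable_pattern n z (a j) (a (j + 1))
  rw [Finset.sum_eq_zero fun j hj => ha j (Finset.mem_range.1 hj), h0, hN] at hsum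
  rw [mass, ← hsum, mul_zero]

end Pattern

section Xi

variable {n k : ℕ} {z : ℕ → ℝ} {d δ s t : ℝ}

lemma xi_neg_one (n : ℕ) (z : ℕ → ℝ) : xi n z (-1) = 0 :=
  intervalIntegral.integral_same

lemma xi_one (n : ℕ) (z : ℕ → ℝ) : xi n z 1 = 0 := by
  rw [xi, intervalIntegral.integral_sub (intervalIntegrable_pattern ..) intervalIntegrable_const,
    intervalIntegral.integral_const, mass, smul_eq_mul]
  ring

lemma continuous_xi (n : ℕ) (z : ℕ → ℝ) : Continuous (xi n z) :=
  intervalIntegral.continuous_primitive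
    (fun a b => (intervalIntegrable_pattern n z a b).sub intervalIntegrable_const) (-1)

lemma xi_sub_xi_of_mass_eq_zero (hm : mass n z = 0) (s t : ℝ) :
    xi n z t - xi n z s = ∫ x in s..t, pattern n z x := by
  simp only [xi, hm, sub_zero]
  exact intervalIntegral.integral_interval_sub_left (intervalIntegrable_pattern ..)
    (intervalIntegrable_pattern ..)

namespace IsConfig

lemma xi_sub_xi (hz : IsConfig n z) (hm : mass n z = 0) (hk : k ≤ n)
    (hs : s ∈ Icc (z k) (z (k + 1))) (ht : t ∈ Icc (z k) (z (k + 1))) :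
    xi n z t - xi n z s = (-1) ^ (k + 1) * (t - s) := by
  rw [xi_sub_xi_of_mass_eq_zero hm, hz.integral_pattern hk hs ht]

lemma xi_add_eq_xi_sub (hz : IsConfig n z) (hm : mass n z = 0) (hk : k < n) (hd : 0 ≤ d)
    (hleft : z k ≤ z (k + 1) - d) (hright : z (k + 1) + d ≤ z (k + 2)) :
    xi n z (z (k + 1) + d) = xi n z (z (k + 1) - d) := by
  rw [← sub_eq_zero, xi_sub_xi_of_mass_eq_zero hm,
    hz.integral_pattern_around_interface hk hd hleft hright]

lemma xi_nonpos_of_gap_eq (hz : IsConfig n z) (hm : mass n z = 0)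
    (hgap : ∀ k ≤ n, z (k + 1) - z k = δ) (ht : t ∈ Icc (-1) 1) : xi n z t ≤ 0 := by
  obtain ⟨k, hk, htk⟩ := hz.exists_mem_Icc ht
  clear ht
  induction k generalizing t with
  | zero =>
    have hslope := hz.xi_sub_xi hm hk ⟨le_rfl, (hz.lt_succ hk).le⟩ htk
    rw [hz.1, xi_neg_one, zero_add, pow_one] at hslope
    linarith [htk.1, hz.1]
  | succ k ih =>
    have hgap_left := hgap k (by lia)
    have hgap_right := hgap (k + 1) hk
    have hreflect := hz.xi_add_eq_xi_sub hm (d := t - z (k + 1)) hk (by linarith [htk.1])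
      (by linarith [htk.2]) (by linarith [htk.2])
    rw [add_sub_cancel] at hreflect
    rw [hreflect]
    exact ih (by lia) ⟨by linarith [htk.2], by linarith [htk.1]⟩

end IsConfig

end Xi

lemma one_sub_sq_pos {x : ℝ} (hx : x ∈ Ioo (-1) 1) : 0 < 1 - x ^ 2 :=
  sub_pos.2 ((sq_lt_one_iff_abs_lt_one x).2 (abs_lt.2 hx))

section Potential

variable {n : ℕ} {z : ℕ → ℝ} {a b x : ℝ}

lemma intervalIntegrable_div_one_sub_sq {f : ℝ → ℝ} (hf : Continuous f) (ha : a ∈ Ioo (-1) 1)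
    (hb : b ∈ Ioo (-1) 1) : IntervalIntegrable (fun t => f t / (1 - t ^ 2)) volume a b :=
  (hf.continuousOn.div (by fun_prop) fun _ ht =>
    (one_sub_sq_pos (ordConnected_Ioo.uIcc_subset ha hb ht)).ne').intervalIntegrable

lemma pot_zero (n : ℕ) (z : ℕ → ℝ) : pot n z 0 = 0 :=
  intervalIntegral.integral_same

lemma pot_sub_pot (n : ℕ) (z : ℕ → ℝ) (ha : a ∈ Ioo (-1) 1) (hb : b ∈ Ioo (-1) 1) :
    pot n z b - pot n z a = ∫ t in a..b, xi n z t / (1 - t ^ 2) := by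
  have h0 : (0 : ℝ) ∈ Ioo (-1) 1 := by norm_num
  exact intervalIntegral.integral_interval_sub_left
    (intervalIntegrable_div_one_sub_sq (continuous_xi n z) h0 hb)
    (intervalIntegrable_div_one_sub_sq (continuous_xi n z) h0 ha)

lemma pot_nonpos (hxi : ∀ t ∈ Icc 0 x, xi n z t ≤ 0) (hx : x ∈ Ico 0 1) : pot n z x ≤ 0 := by
  rw [pot, ← neg_nonneg, ← intervalIntegral.integral_neg]
  refine intervalIntegral.integral_nonneg hx.1 fun t ht => neg_nonneg.2 ?_
  exact div_nonpos_of_nonpos_of_nonneg (hxi t ht)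
    (one_sub_sq_pos ⟨by linarith [ht.1], ht.2.trans_lt hx.2⟩).le

end Potential

/-- The geodesic curvature `x / √(1 - x²)`, up to orientation, of the circle at height `x` on the
unit sphere; the junk value at the poles `x = ±1` is `0`. -/
noncomputable def latitudeCurvature (x : ℝ) : ℝ :=
  x / √(1 - x ^ 2)

section Curvature

variable {n : ℕ} {z : ℕ → ℝ} {γ h x : ℝ}

lemma isCritical_iff_latitudeCurvature : IsCritical γ n z ↔ ∃ lam : ℝ, ∀ k, 1 ≤ k → k ≤ n →
    (-1) ^ (k + 1) * latitudeCurvature (z k) + 4 * γ * pot n z (z k) = lam := by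
  simp only [IsCritical, latitudeCurvature, mul_div_assoc]

lemma latitudeCurvature_zero : latitudeCurvature 0 = 0 :=
  zero_div _

lemma latitudeCurvature_pos (hx : x ∈ Ioo 0 1) : 0 < latitudeCurvature x :=
  div_pos hx.1 (Real.sqrt_pos.2 (one_sub_sq_pos ⟨by linarith [hx.1], hx.2⟩))

lemma latitudeCurvature_sq (hx : x ∈ Ioo (-1) 1) :
    latitudeCurvature x ^ 2 = x ^ 2 / (1 - x ^ 2) := by
  rw [latitudeCurvature, div_pow, Real.sq_sqrt (one_sub_sq_pos hx).le]

lemma latitudeCurvature_le_three_mul (hh : 0 < h) (hh6 : h ≤ 1 / 6) :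
    latitudeCurvature (1 - h) ≤ 3 * latitudeCurvature (1 - 3 * h) := by
  have hx : 1 - h ∈ Ioo 0 1 := ⟨by linarith, by linarith⟩
  have hy : 1 - 3 * h ∈ Ioo 0 1 := ⟨by linarith, by linarith⟩
  have hx' : 1 - h ∈ Ioo (-1) 1 := ⟨by linarith, by linarith⟩
  have hy' : 1 - 3 * h ∈ Ioo (-1) 1 := ⟨by linarith, by linarith⟩
  refine (sq_le_sq₀ (latitudeCurvature_pos hx).le (by linarith [latitudeCurvature_pos hy])).1 ?_
  rw [mul_pow, latitudeCurvature_sq hx', latitudeCurvature_sq hy', ← mul_div_assoc,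
    div_le_div_iff₀ (one_sub_sq_pos hx') (one_sub_sq_pos hy'), ← sub_nonneg]
  have cubic_nonneg : 0 ≤ 4 * (1 - 4 * h) ^ 2 - 24 * h ^ 3 := by
    nlinarith [pow_le_pow_left₀ hh.le hh6 3]
  calc 0 ≤ 3 * h * (4 * (1 - 4 * h) ^ 2 - 24 * h ^ 3) := by positivity
    _ = _ := by ring

end Curvature

theorem IsConfig.not_isCritical_of_xi_nonpos {n j : ℕ} {z : ℕ → ℝ} (hz : IsConfig n z)
    (hxi : ∀ t ∈ Ico 0 1, xi n z t ≤ 0) (hjn : j + 2 ≤ n) (hzj : z j = 0) (γ : ℝ) :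
    ¬ IsCritical γ n z := by
  rw [isCritical_iff_latitudeCurvature]
  rintro ⟨lam, hcrit⟩
  have hj : 1 ≤ j := Nat.one_le_iff_ne_zero.2 fun hj0 => by simp [hj0, hz.1] at hzj
  have hlam : lam = 0 := by
    simpa [hzj, latitudeCurvature_zero, pot_zero] using (hcrit j hj (by lia)).symm
  have interface_mem : ∀ k, j < k → k ≤ n → z k ∈ Ioo 0 1 := fun k hjk hk =>
    ⟨hzj ▸ hz.2.2 j k hjk (by lia), (hz.mem_Ioo (by lia) hk).2⟩
  have pot_le : ∀ k, j < k → k ≤ n → pot n z (z k) ≤ 0 := fun k hjk hk =>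
    have hk' := interface_mem k hjk hk
    pot_nonpos (fun t ht => hxi t ⟨ht.1, ht.2.trans_lt hk'.2⟩) ⟨hk'.1.le, hk'.2⟩
  have eq₁ := hcrit (j + 1) (by lia) (by lia)
  have eq₂ := hcrit (j + 2) (by lia) (by lia)
  have hκ := mul_pos (latitudeCurvature_pos (interface_mem (j + 1) (by lia) (by lia)))
    (latitudeCurvature_pos (interface_mem (j + 2) (by lia) hjn))
  have hv := mul_nonneg_of_nonpos_of_nonpos (pot_le (j + 1) (by lia) (by lia))
    (pot_le (j + 2) (by lia) hjn)
  set f₁ := latitudeCurvature (z (j + 1))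
  set f₂ := latitudeCurvature (z (j + 2))
  set v₁ := pot n z (z (j + 1))
  set v₂ := pot n z (z (j + 2))
  have sign_sq : ((-1 : ℝ) ^ j) ^ 2 = 1 := by rw [← pow_mul', Even.neg_one_pow (by simp)]
  have product_eq : f₁ * f₂ = -(16 * γ ^ 2 * (v₁ * v₂)) :=
    calc f₁ * f₂ = ((-1) ^ j * f₁) * ((-1) ^ j * f₂) := by linear_combination -f₁ * f₂ * sign_sq
      _ = -(4 * γ * v₁) * (4 * γ * v₂) := by
        congr 1
        · linear_combination eq₁ + hlam
        · linear_combination -eq₂ - hlam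
      _ = -(16 * γ ^ 2 * (v₁ * v₂)) := by ring
  linarith [mul_nonneg (by positivity : 0 ≤ 16 * γ ^ 2) hv]

/-- The first moment `∫_{c-h}^{c+h} (t - c)/(1 - t²) dt` about the centre of an interval; up to
sign, it is the increment of the potential across `[c - h, c + h]` when `ξ(c) = 0`. -/
noncomputable def centredMoment (c h : ℝ) : ℝ :=
  ∫ t in (c - h)..(c + h), (t - c) / (1 - t ^ 2)

/-- The sum of the values at `c - s` and `c + s` of the integrand of `centredMoment c h`. -/
noncomputable def foldedIntegrand (c s : ℝ) : ℝ :=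
  4 * c * s ^ 2 / ((1 - (c + s) ^ 2) * (1 - (c - s) ^ 2))

section Moment

variable {c h s : ℝ}

lemma integral_eq_integral_fold {f : ℝ → ℝ}
    (hf : IntervalIntegrable f volume (c - h) (c + h)) :
    ∫ t in (c - h)..(c + h), f t = ∫ s in (0 : ℝ)..h, (f (c - s) + f (c + s)) := by
  have hc : c ∈ uIcc (c - h) (c + h) := by
    rcases le_total 0 h with hh | hh
    · exact mem_uIcc.2 (.inl ⟨by linarith, by linarith⟩)
    · exact mem_uIcc.2 (.inr ⟨by linarith, by linarith⟩)
  have left_integrable := hf.mono_set (uIcc_subset_uIcc left_mem_uIcc hc)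
  have right_integrable := hf.mono_set (uIcc_subset_uIcc hc right_mem_uIcc)
  have left_comp : IntervalIntegrable (fun s => f (c - s)) volume 0 h := by
    simpa using (left_integrable.comp_sub_left c).symm
  have right_comp : IntervalIntegrable (fun s => f (c + s)) volume 0 h := by
    simpa using right_integrable.comp_add_left c
  rw [intervalIntegral.integral_add left_comp right_comp,
    intervalIntegral.integral_comp_sub_left, intervalIntegral.integral_comp_add_left, sub_zero,
    add_zero, intervalIntegral.integral_add_adjacent_intervals left_integrable right_integrable]

lemma fold_mem_Ioo (hl : -1 < c - h) (hr : c + h < 1) (hs : s ∈ Icc 0 h) :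
    c - s ∈ Ioo (-1) 1 ∧ c + s ∈ Ioo (-1) 1 := by
  obtain ⟨hs0, hsh⟩ := hs
  exact ⟨⟨by linarith, by linarith⟩, ⟨by linarith, by linarith⟩⟩

lemma centredMoment_eq_integral_foldedIntegrand (hh : 0 ≤ h) (hl : -1 < c - h)
    (hr : c + h < 1) : centredMoment c h = ∫ s in (0 : ℝ)..h, foldedIntegrand c s := by
  obtain ⟨hl', hr'⟩ := fold_mem_Ioo hl hr (right_mem_Icc.2 hh)
  rw [centredMoment, integral_eq_integral_fold
    (intervalIntegrable_div_one_sub_sq (by fun_prop : Continuous fun t => t - c) hl' hr')]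
  refine intervalIntegral.integral_congr fun s hs => ?_
  obtain ⟨hminus, hplus⟩ := fold_mem_Ioo hl hr (uIcc_of_le hh ▸ hs)
  have := (one_sub_sq_pos hminus).ne'
  have := (one_sub_sq_pos hplus).ne'
  simp only [foldedIntegrand]
  field_simp
  ring

lemma intervalIntegrable_foldedIntegrand (hh : 0 ≤ h) (hl : -1 < c - h) (hr : c + h < 1) :
    IntervalIntegrable (foldedIntegrand c) volume 0 h := by
  refine ContinuousOn.intervalIntegrable
    (ContinuousOn.div (by fun_prop) (by fun_prop) fun s hs => ?_)
  obtain ⟨hminus, hplus⟩ := fold_mem_Ioo hl hr (uIcc_of_le hh ▸ hs)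
  exact mul_ne_zero (one_sub_sq_pos hplus).ne' (one_sub_sq_pos hminus).ne'

lemma centredMoment_nonneg (hc : 0 ≤ c) (hh : 0 ≤ h) (hr : c + h < 1) :
    0 ≤ centredMoment c h := by
  have hl : -1 < c - h := by linarith
  rw [centredMoment_eq_integral_foldedIntegrand hh hl hr]
  refine intervalIntegral.integral_nonneg hh fun s hs => ?_
  obtain ⟨hminus, hplus⟩ := fold_mem_Ioo hl hr hs
  have := one_sub_sq_pos hminus
  have := one_sub_sq_pos hplus
  unfold foldedIntegrand
  positivity

-- The factors vanishing at the pole contribute `(16h² - s²)/(4h² - s²) ≥ 4` to the ratio of the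
-- two sides, the remaining factors at least `1`.
lemma four_mul_foldedIntegrand_le (hh : 0 < h) (hh6 : h ≤ 1 / 6) (hs : s ^ 2 ≤ h ^ 2) :
    4 * foldedIntegrand (1 - 4 * h) s ≤ foldedIntegrand (1 - 2 * h) s := by
  have factor_left : (1 - (1 - 4 * h + s) ^ 2) * (1 - (1 - 4 * h - s) ^ 2) =
      (16 * h ^ 2 - s ^ 2) * ((2 - 4 * h) ^ 2 - s ^ 2) := by ring
  have factor_right : (1 - (1 - 2 * h + s) ^ 2) * (1 - (1 - 2 * h - s) ^ 2) =
      (4 * h ^ 2 - s ^ 2) * ((2 - 2 * h) ^ 2 - s ^ 2) := by ring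
  have hh2 : 0 < h ^ 2 := by positivity
  have pos₁ : 0 < 16 * h ^ 2 - s ^ 2 := by linarith
  have pos₂ : 0 < (2 - 4 * h) ^ 2 - s ^ 2 := by nlinarith
  have pos₃ : 0 < 4 * h ^ 2 - s ^ 2 := by linarith
  have pos₄ : 0 < (2 - 2 * h) ^ 2 - s ^ 2 := by nlinarith
  have vanishing_factors : 4 * (4 * h ^ 2 - s ^ 2) ≤ 16 * h ^ 2 - s ^ 2 := by
    linarith [sq_nonneg s]
  have remaining_factors : (1 - 4 * h) * ((2 - 2 * h) ^ 2 - s ^ 2) ≤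
      (1 - 2 * h) * ((2 - 4 * h) ^ 2 - s ^ 2) := by
    nlinarith [mul_nonneg hh.le (sub_nonneg.2 hs), mul_nonneg hh2.le (sub_nonneg.2 hh6)]
  rw [foldedIntegrand, foldedIntegrand, factor_left, factor_right, ← mul_div_assoc,
    div_le_div_iff₀ (mul_pos pos₁ pos₂) (mul_pos pos₃ pos₄)]
  have product := mul_le_mul vanishing_factors remaining_factors
    (mul_nonneg (by linarith) pos₄.le) pos₁.le
  linarith [mul_le_mul_of_nonneg_left product (by positivity : 0 ≤ 4 * s ^ 2)]

lemma four_mul_centredMoment_le (hh : 0 < h) (hh6 : h ≤ 1 / 6) :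
    4 * centredMoment (1 - 4 * h) h ≤ centredMoment (1 - 2 * h) h := by
  have hl₁ : -1 < 1 - 4 * h - h := by linarith
  have hr₁ : 1 - 4 * h + h < 1 := by linarith
  have hl₂ : -1 < 1 - 2 * h - h := by linarith
  have hr₂ : 1 - 2 * h + h < 1 := by linarith
  rw [centredMoment_eq_integral_foldedIntegrand hh.le hl₁ hr₁,
    centredMoment_eq_integral_foldedIntegrand hh.le hl₂ hr₂,
    ← intervalIntegral.integral_const_mul]
  exact intervalIntegral.integral_mono_on hh.le
    ((intervalIntegrable_foldedIntegrand hh.le hl₁ hr₁).const_mul 4)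
    (intervalIntegrable_foldedIntegrand hh.le hl₂ hr₂)
    fun s hs => four_mul_foldedIntegrand_le hh hh6 (pow_le_pow_left₀ hs.1 hs.2 2)

end Moment

section PolarInterfaces

variable {n k : ℕ} {z : ℕ → ℝ} {γ c h : ℝ}

namespace IsConfig

lemma pot_sub_pot_eq_centredMoment (hz : IsConfig n z) (hm : mass n z = 0) (hk0 : 1 ≤ k)
    (hk : k < n) (hleft : z k = c - h) (hright : z (k + 1) = c + h) (hc : xi n z c = 0) :
    pot n z (z (k + 1)) - pot n z (z k) = (-1) ^ (k + 1) * centredMoment c h := by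
  rw [pot_sub_pot n z (hz.mem_Ioo hk0 hk.le) (hz.mem_Ioo (by lia) hk), centredMoment, ← hleft,
    ← hright, ← intervalIntegral.integral_const_mul]
  refine intervalIntegral.integral_congr fun t ht => ?_
  have hlt := hz.lt_succ hk.le
  rw [uIcc_of_le hlt.le] at ht
  have xi_eq := hz.xi_sub_xi hm hk.le (s := c) ⟨by linarith, by linarith⟩ ht
  rw [hc, sub_zero] at xi_eq
  simp only [xi_eq, mul_div_assoc]

lemma latitudeCurvature_add_eq (hz : IsConfig n z) (hm : mass n z = 0)
    (hcrit : IsCritical γ n z) (hk0 : 1 ≤ k) (hk : k < n) (hleft : z k = c - h)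
    (hright : z (k + 1) = c + h) (hc : xi n z c = 0) :
    latitudeCurvature (z k) + latitudeCurvature (z (k + 1)) = 4 * γ * centredMoment c h := by
  obtain ⟨lam, hlam⟩ := isCritical_iff_latitudeCurvature.1 hcrit
  have hpot := hz.pot_sub_pot_eq_centredMoment hm hk0 hk hleft hright hc
  refine mul_left_cancel₀ (pow_ne_zero (k + 1) (by norm_num : (-1 : ℝ) ≠ 0)) ?_
  linear_combination hlam k hk0 hk.le - hlam (k + 1) (by lia) hk + 4 * γ * hpot

theorem not_isCritical_of_last_three (hz : IsConfig (n + 3) z) (hm : mass (n + 3) z = 0)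
    (hh6 : h ≤ 1 / 6) (h₁ : z (n + 1) = 1 - 5 * h) (h₂ : z (n + 2) = 1 - 3 * h)
    (h₃ : z (n + 3) = 1 - h) (γ : ℝ) : ¬ IsCritical γ (n + 3) z := by
  intro hcrit
  have h₄ : z (n + 4) = 1 := hz.2.1
  have hh : 0 < h := by linarith [(hz.mem_Ioo (k := n + 3) (by lia) le_rfl).2]
  have xi_mid₂ : xi (n + 3) z (1 - 2 * h) = 0 := by
    have hreflect := hz.xi_add_eq_xi_sub hm (k := n + 2) (d := h) (by lia) hh.le
      (by linarith) (by linarith)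
    rw [h₃, sub_add_cancel, xi_one] at hreflect
    rw [hreflect]
    ring_nf
  have xi_mid₁ : xi (n + 3) z (1 - 4 * h) = 0 := by
    have hreflect := hz.xi_add_eq_xi_sub hm (k := n + 1) (d := h) (by lia) hh.le
      (by linarith) (by linarith)
    rw [h₂] at hreflect
    rw [← xi_mid₂]
    convert hreflect.symm using 2 <;> ring
  have sum₁ := hz.latitudeCurvature_add_eq hm hcrit (k := n + 1) (h := h) (by lia) (by lia)
    (by linarith) (by linarith) xi_mid₁
  have sum₂ := hz.latitudeCurvature_add_eq hm hcrit (k := n + 2) (h := h) (by lia) (by lia)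
    (by linarith) (by linarith) xi_mid₂
  simp only [h₁, h₂, h₃] at sum₁ sum₂
  have hf₁ := latitudeCurvature_pos (x := 1 - 5 * h) ⟨by linarith, by linarith⟩
  have hf₂ := latitudeCurvature_pos (x := 1 - 3 * h) ⟨by linarith, by linarith⟩
  have hf₃ := latitudeCurvature_le_three_mul hh hh6
  have hD := centredMoment_nonneg (c := 1 - 4 * h) (by linarith) hh.le (by linarith)
  have hγ : 0 < γ := by
    by_contra! hγ
    linarith [mul_nonpos_of_nonpos_of_nonneg hγ hD]
  linarith [mul_le_mul_of_nonneg_left (four_mul_centredMoment_le hh hh6) hγ.le]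

end IsConfig

end PolarInterfaces

/-- The heights `-1 + i/n` dividing `[-1, 1]` into `2n` equal cells. -/
noncomputable def endpointGrid (n i : ℕ) : ℝ :=
  -1 + (i : ℝ) / (n : ℝ)

/-- The midpoints `-1 + (2i - 1)/(2n)`, for `1 ≤ i ≤ 2n`, of the cells of `endpointGrid n`,
completed by the poles `-1` at `i = 0` and `1` at `i > 2n`. -/
noncomputable def midpointGrid (n i : ℕ) : ℝ :=
  if i = 0 then -1 else if i ≤ 2 * n then -1 + (2 * (i : ℝ) - 1) / (2 * (n : ℝ)) else 1

section EndpointGrid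

variable {n : ℕ}

lemma endpointGrid_succ_sub (n k : ℕ) : endpointGrid n (k + 1) - endpointGrid n k = 1 / n := by
  simp only [endpointGrid]
  push_cast
  ring

lemma isConfig_endpointGrid (hn : 1 ≤ n) : IsConfig (2 * n - 1) (endpointGrid n) := by
  refine .of_lt_succ (by simp [endpointGrid]) ?_ fun k _ => ?_
  · rw [show 2 * n - 1 + 1 = 2 * n by lia, endpointGrid]
    push_cast
    field_simp
    norm_num
  · rw [← sub_pos, endpointGrid_succ_sub]
    positivity

lemma mass_endpointGrid (hn : 1 ≤ n) : mass (2 * n - 1) (endpointGrid n) = 0 := by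
  have hz := isConfig_endpointGrid hn
  refine mass_eq_zero_of_partition (a := fun j => endpointGrid n (2 * j)) (N := n) hz.1 ?_ ?_
  · simpa only [show 2 * n - 1 + 1 = 2 * n by lia] using hz.2.1
  · intro j hj
    have hleft := endpointGrid_succ_sub n (2 * j)
    have hright := endpointGrid_succ_sub n (2 * j + 1)
    convert hz.integral_pattern_around_interface (k := 2 * j) (d := 1 / n) (by lia)
      (by positivity) (by linarith) (by linarith) using 2
    · linarith
    · rw [mul_add_one]
      linarith

theorem not_isCritical_endpointGrid (hn : 3 ≤ n) (γ : ℝ) :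
    ¬ IsCritical γ (2 * n - 1) (endpointGrid n) := by
  have hn1 : 1 ≤ n := by lia
  have hz := isConfig_endpointGrid hn1
  have hzn : endpointGrid n n = 0 := by
    rw [endpointGrid, div_self (by positivity), neg_add_cancel]
  have hxi : ∀ t ∈ Ico 0 1, xi (2 * n - 1) (endpointGrid n) t ≤ 0 := fun t ht =>
    hz.xi_nonpos_of_gap_eq (mass_endpointGrid hn1) (fun k _ => endpointGrid_succ_sub n k)
      ⟨by linarith [ht.1], ht.2.le⟩
  exact hz.not_isCritical_of_xi_nonpos hxi (by lia) hzn γ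

end EndpointGrid

section MidpointGrid

variable {n k : ℕ}

lemma midpointGrid_zero (n : ℕ) : midpointGrid n 0 = -1 :=
  if_pos rfl

lemma midpointGrid_last (n : ℕ) : midpointGrid n (2 * n + 1) = 1 := by
  simp [midpointGrid]

lemma midpointGrid_succ (hk : k < 2 * n) :
    midpointGrid n (k + 1) = -1 + (2 * k + 1) * (1 / (2 * n)) := by
  rw [midpointGrid, if_neg k.succ_ne_zero, if_pos (Nat.succ_le_of_lt hk)]
  push_cast
  ring

lemma midpointGrid_add_half_le (hn : 1 ≤ n) (hk : k ≤ 2 * n) :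
    midpointGrid n k + 1 / (2 * n) ≤ midpointGrid n (k + 1) := by
  have half_pos : (0 : ℝ) < 1 / (2 * n) := by positivity
  rcases k with _ | j
  · rw [midpointGrid_zero, midpointGrid_succ (by lia), Nat.cast_zero]
    linarith
  rw [midpointGrid_succ hk]
  rcases hk.lt_or_eq with hlt | heq
  · rw [midpointGrid_succ hlt]
    push_cast
    linarith
  · rw [heq, midpointGrid_last]
    have last_eq : (j : ℝ) + 1 = 2 * n := by exact_mod_cast heq
    rw [eq_sub_of_add_eq last_eq]
    field_simp
    linarith

lemma isConfig_midpointGrid (hn : 1 ≤ n) : IsConfig (2 * n) (midpointGrid n) := by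
  refine .of_lt_succ (midpointGrid_zero n) (midpointGrid_last n) fun k hk => ?_
  have half_pos : (0 : ℝ) < 1 / (2 * n) := by positivity
  linarith [midpointGrid_add_half_le hn hk]

lemma mass_midpointGrid (hn : 1 ≤ n) : mass (2 * n) (midpointGrid n) = 0 := by
  refine mass_eq_zero_of_partition (a := endpointGrid n) (N := 2 * n) ?_ ?_ fun j hj => ?_
  · simp [endpointGrid]
  · rw [endpointGrid]
    push_cast
    field_simp
    norm_num
  · have hleft := midpointGrid_add_half_le hn hj.le
    have hright := midpointGrid_add_half_le hn (Nat.succ_le_of_lt hj)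
    convert (isConfig_midpointGrid hn).integral_pattern_around_interface (k := j)
      (d := 1 / (2 * n)) hj (by positivity) (by linarith) hright using 2 <;>
    · rw [midpointGrid_succ hj, endpointGrid]
      push_cast
      ring

theorem not_isCritical_midpointGrid (hn : 3 ≤ n) (γ : ℝ) :
    ¬ IsCritical γ (2 * n) (midpointGrid n) := by
  have hz := isConfig_midpointGrid (n := n) (by lia)
  have hm := mass_midpointGrid (n := n) (by lia)
  have hh6 : (1 : ℝ) / (2 * n) ≤ 1 / 6 := by
    have : (3 : ℝ) ≤ n := by exact_mod_cast hn
    gcongr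
    linarith
  have hmul : (n : ℝ) * (1 / (2 * n)) = 1 / 2 := by field_simp
  obtain ⟨m, hnm⟩ : ∃ m, 2 * n = m + 3 := ⟨2 * n - 3, by lia⟩
  have hnm' : 2 * (n : ℝ) = m + 3 := by exact_mod_cast hnm
  rw [hnm] at hz hm ⊢
  refine hz.not_isCritical_of_last_three hm hh6 ?_ ?_ ?_ γ
  all_goals
    rw [midpointGrid_succ (by lia)]
    push_cast
    linear_combination 4 * hmul - 2 * (1 / (2 * (n : ℝ))) * hnm'

end MidpointGrid

theorem uniform_distribution_not_critical_general (n : ℕ) (hn : 3 ≤ n) (γ : ℝ) :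
    ¬ IsCritical γ (2 * n - 1) (fun i => -1 + (i : ℝ) / (n : ℝ)) ∧
    ¬ IsCritical γ (2 * n)
        (fun i => if i = 0 then -1
          else if i ≤ 2 * n then -1 + (2 * (i : ℝ) - 1) / (2 * (n : ℝ)) else 1) :=
  ⟨not_isCritical_endpointGrid hn γ, not_isCritical_midpointGrid hn γ⟩

/-- Proposition: uniform interface distribution.  For `n ≥ 3` and any
`γ > 0`, neither the uniformly distributed configuration with `2n-1` interfaces at
`z_i = -1 + i/n` nor the one with `2n` interfaces at `z_i = -1 + (2i-1)/(2n)` is a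
critical point of `E_γ`:  no uniformly distributed axisymmetric pattern with more than
four interfaces is a critical point. -/
theorem uniform_distribution_not_critical (n : ℕ) (hn : 3 ≤ n) (γ : ℝ) (hγ : 0 < γ) :
    ¬ IsCritical γ (2 * n - 1) (fun i => -1 + (i : ℝ) / (n : ℝ)) ∧
    ¬ IsCritical γ (2 * n)
        (fun i => if i = 0 then -1
          else if i ≤ 2 * n then -1 + (2 * (i : ℝ) - 1) / (2 * (n : ℝ)) else 1) :=
  uniform_distribution_not_critical_general n hn γ
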